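/- arXiv:2004.09737 — 2 statements merged into one kernel-verified Lean document; each statement's English description precedes it below -/
import Mathlib

section
/- Let p ≥ 1, 0 < s < ∞, t ∈ [0,1], and let f, g, h : ℝ^n → [0,∞) be bounded integrable functions satisfying the L_p-BBL condition: for every x ∈ supp(f), y ∈ supp(g) and λ ∈ [0,1], h((1−t)^{1/p}(1−λ)^{(p−1)/p} x + t^{1/p} λ^{(p−1)/p} y) ≥ [(1−t)^{1/p}(1−λ)^{(p−1)/p} f(x)^{1/s} + t^{1/p} λ^{(p−1)/p} g(y)^{1/s}]^s. Then ∫_{ℝ^n} h(x) dx ≥ M_{p/(n+s)}^t(∫_{ℝ^n} f(x) dx, ∫_{ℝ^n} g(x) dx). -/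
open MeasureTheory Set

/-- The `γ`-mean `M_γ^t(a,b)`. -/
noncomputable def Mmean (γ t a b : ℝ) : ℝ :=
  if 0 < a * b then ((1 - t) * a ^ γ + t * b ^ γ) ^ (1 / γ) else 0

lemma cpt_aux (S : Set ℝ) (hS : MeasurableSet S) (hne : S.Nonempty) (c d e : ENNReal)
    (H : ∀ S1, S1 ⊆ S → IsCompact S1 → S1.Nonempty → c * volume S1 + d ≤ e) :
    c * volume S + d ≤ e := by
  obtain ⟨x, hx⟩ := hne
  have hd : d ≤ e := by
    have := H {x} (by simpa using hx) isCompact_singleton (by simp)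
    simpa using this
  by_cases hdt : d = ⊤
  · subst hdt
    simp at hd
    simp [hd]
  have : c * volume S ≤ e - d := by
    rw [hS.measure_eq_iSup_isCompact]
    simp only [ENNReal.mul_iSup]
    refine iSup_le fun S1 => iSup_le fun h1 => iSup_le fun h2 => ?_
    rcases S1.eq_empty_or_nonempty with h | h
    · simp [h]
    · exact ENNReal.le_sub_of_add_le_right hdt (H S1 h1 h2 h)
  calc c * volume S + d ≤ (e - d) + d := by gcongr
    _ = e := tsub_add_cancel_of_le hd

open scoped Pointwise in
lemma vol_aff (S : Set ℝ) (a c : ℝ) (ha : 0 < a) :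
    volume ((fun x => a * x + c) '' S) = ENNReal.ofReal a * volume S := by
  have : (fun x => a * x + c) '' S = (fun x => x + c) '' (a • S) := by
    rw [← Set.image_smul, Set.image_image]; rfl
  rw [this, Set.image_add_right, measure_preimage_add_right, Measure.addHaar_smul]
  simp [abs_of_pos ha]

lemma bm1 (S T K : Set ℝ) (hS : MeasurableSet S) (hT : MeasurableSet T)
    (hSn : S.Nonempty) (hTn : T.Nonempty) (a b : ℝ) (ha : 0 < a) (hb : 0 < b)
    (H : ∀ x ∈ S, ∀ y ∈ T, a * x + b * y ∈ K) :
    ENNReal.ofReal a * volume S + ENNReal.ofReal b * volume T ≤ volume K := by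
  refine cpt_aux S hS hSn _ _ _ fun S1 hS1 cS1 nS1 => ?_
  rw [add_comm]
  refine cpt_aux T hT hTn _ _ _ fun T1 hT1 cT1 nT1 => ?_
  obtain ⟨M, hM⟩ := cS1.exists_isGreatest nS1
  obtain ⟨m, hm⟩ := cT1.exists_isLeast nT1
  rw [← vol_aff T1 b (a * M) hb, ← vol_aff S1 a (b * m) ha]
  rw [← measure_union₀]
  · apply measure_mono
    rintro z (⟨y, hy, rfl⟩ | ⟨y, hy, rfl⟩)
    · have := H M (hS1 hM.1) y (hT1 hy)
      simpa [add_comm] using this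
    · exact H y (hS1 hy) m (hT1 hm.1)
  · exact ((cS1.image (by fun_prop)).measurableSet).nullMeasurableSet
  · refine measure_mono_null (t := {a * M + b * m}) ?_ (by simp)
    rintro z ⟨⟨y, hy, rfl⟩, ⟨x, hx, hxy⟩⟩
    have h1 := mul_le_mul_of_nonneg_left (hM.2 hx) ha.le
    have h2 := mul_le_mul_of_nonneg_left (hm.2 hy) hb.le
    simp only at hxy
    simp only [mem_singleton_iff]
    linarith

lemma layer (f : ℝ → ENNReal) (hf : Measurable f) (h1 : ∀ x, f x ≤ 1) :
    ∫⁻ x, f x = ∫⁻ r in Ioi (0:ℝ), volume {x | ENNReal.ofReal r < f x} := by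
  have h2 : ∀ x, f x ≠ ⊤ := fun x => ((h1 x).trans_lt ENNReal.one_lt_top).ne
  have := lintegral_eq_lintegral_meas_lt (μ := (volume : Measure ℝ)) (f := fun x => (f x).toReal)
    (Filter.Eventually.of_forall fun x => ENNReal.toReal_nonneg) hf.ennreal_toReal.aemeasurable
  simp only [ENNReal.ofReal_toReal (h2 _)] at this
  rw [this]
  refine setLIntegral_congr_fun measurableSet_Ioi fun r hr => ?_
  congr 1
  ext x
  simp only [mem_ofPred_eq]
  rw [ENNReal.ofReal_lt_iff_lt_toReal (le_of_lt hr) (h2 x)]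

lemma L1 (f g h : ℝ → ENNReal) (hf : Measurable f) (hg : Measurable g) (hh : Measurable h)
    (f1 : ⨆ x, f x = 1) (g1 : ⨆ x, g x = 1) (a b : ℝ) (ha : 0 < a) (hb : 0 < b)
    (H : ∀ x y, min (f x) (g y) ≤ h (a * x + b * y)) :
    ENNReal.ofReal a * (∫⁻ x, f x) + ENNReal.ofReal b * (∫⁻ x, g x) ≤ ∫⁻ x, h x := by
  have hf1 : ∀ x, f x ≤ 1 := fun x => f1 ▸ le_iSup f x
  have hg1 : ∀ x, g x ≤ 1 := fun x => g1 ▸ le_iSup g x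
  have hm : ∫⁻ x, min (h x) 1 ≤ ∫⁻ x, h x := lintegral_mono fun x => min_le_left _ _
  refine le_trans ?_ hm
  rw [layer f hf hf1, layer g hg hg1, layer _ (hh.min measurable_const) fun x => min_le_right _ _]
  have mono : ∀ k : ℝ → ENNReal, Measurable fun r : ℝ => volume {x | ENNReal.ofReal r < k x} := by
    intro k
    apply Antitone.measurable
    intro r r' hr
    exact measure_mono fun x (hx : _ < _) => lt_of_le_of_lt (ENNReal.ofReal_le_ofReal hr) hx
  rw [← lintegral_const_mul _ (mono f), ← lintegral_const_mul _ (mono g), ← lintegral_add_left ((mono f).const_mul _)]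
  refine lintegral_mono fun r => ?_
  by_cases hr : ENNReal.ofReal r < 1
  · refine bm1 _ _ _ (hf measurableSet_Ioi) (hg measurableSet_Ioi) ?_ ?_ a b ha hb ?_
    · rw [← f1] at hr; exact lt_iSup_iff.1 hr
    · rw [← g1] at hr; exact lt_iSup_iff.1 hr
    · intro x hx y hy
      exact lt_min (lt_of_lt_of_le (lt_min hx hy) (H x y)) hr
  · push Not at hr
    have e1 : {x | ENNReal.ofReal r < f x} = ∅ := by
      ext x; simpa using (hf1 x).trans hr
    have e2 : {x | ENNReal.ofReal r < g x} = ∅ := by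
      ext x; simpa using (hg1 x).trans hr
    simp [e1, e2]

lemma hterm (a A F : ENNReal) (hat : a ≠ ⊤) (hA0 : A ≠ 0) (hAt : A ≠ ⊤) (s : ℝ) (hs : 0 < s) :
    a * F ^ (1/(s+1)) = (a * A ^ (1/s)) ^ (s/(s+1)) * (a * (A⁻¹ * F)) ^ (1/(s+1)) := by
  have hs1 : 0 < s + 1 := by linarith
  have e1 : 0 ≤ s/(s+1) := by positivity
  have e2 : 0 ≤ 1/(s+1) := by positivity
  rw [ENNReal.mul_rpow_of_nonneg _ _ e1, ENNReal.mul_rpow_of_nonneg _ _ e2,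
    ENNReal.mul_rpow_of_nonneg _ _ e2, ← ENNReal.rpow_mul]
  have e3 : 1 / s * (s/(s+1)) = 1/(s+1) := by field_simp
  rw [e3]
  have e4 : A ^ (1/(s+1)) * A⁻¹ ^ (1/(s+1)) = 1 := by
    rw [← ENNReal.mul_rpow_of_nonneg _ _ e2, ENNReal.mul_inv_cancel hA0 hAt, ENNReal.one_rpow]
  have e5 : a ^ (s/(s+1)) * a ^ (1/(s+1)) = a := by
    rw [← ENNReal.rpow_add_of_nonneg _ _ e1 e2]
    have : s/(s+1) + 1/(s+1) = 1 := by field_simp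
    rw [this, ENNReal.rpow_one]
  calc a * F ^ (1/(s+1)) = (a ^ (s/(s+1)) * a ^ (1/(s+1))) * (A ^ (1/(s+1)) * A⁻¹ ^ (1/(s+1))) * F ^ (1/(s+1)) := by
        rw [e4, e5, mul_one]
    _ = _ := by ring

lemma hold (a b A B F G : ENNReal) (hat : a ≠ ⊤) (hbt : b ≠ ⊤) (hA0 : A ≠ 0) (hAt : A ≠ ⊤)
    (hB0 : B ≠ 0) (hBt : B ≠ ⊤) (s : ℝ) (hs : 0 < s) :
    (a * F ^ (1/(s+1)) + b * G ^ (1/(s+1))) ^ (s+1) ≤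
      (a * A ^ (1/s) + b * B ^ (1/s)) ^ s * (a * (A⁻¹ * F) + b * (B⁻¹ * G)) := by
  have hs1 : 0 < s + 1 := by linarith
  rw [hterm a A F hat hA0 hAt s hs, hterm b B G hbt hB0 hBt s hs]
  have hc : ((s+1)/s).HolderConjugate (s+1) := by
    rw [Real.holderConjugate_iff]
    constructor
    · rw [lt_div_iff₀ hs]; linarith
    · field_simp
  have := ENNReal.inner_le_Lp_mul_Lq (Finset.univ : Finset (Fin 2))
    ![(a * A ^ (1/s)) ^ (s/(s+1)), (b * B ^ (1/s)) ^ (s/(s+1))]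
    ![(a * (A⁻¹ * F)) ^ (1/(s+1)), (b * (B⁻¹ * G)) ^ (1/(s+1))] hc
  simp only [Fin.sum_univ_two, Matrix.cons_val_zero, Matrix.cons_val_one, ← ENNReal.rpow_mul] at this
  have e1 : s / (s+1) * ((s+1)/s) = 1 := by field_simp
  have e2 : 1 / (s+1) * (s+1) = 1 := by field_simp
  have e3 : 1 / ((s+1)/s) * (s+1) = s := by field_simp
  rw [e1, e2] at this
  simp only [ENNReal.rpow_one] at this
  refine (ENNReal.rpow_le_rpow this hs1.le).trans ?_
  rw [ENNReal.mul_rpow_of_nonneg _ _ hs1.le, ← ENNReal.rpow_mul, ← ENNReal.rpow_mul, e2, e3,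
    ENNReal.rpow_one]

lemma L2 (f g h : ℝ → ENNReal) (hf : Measurable f) (hg : Measurable g) (hh : Measurable h)
    (N : ENNReal) (hN : N ≠ ⊤) (f1 : ∀ x, f x ≤ N) (g1 : ∀ x, g x ≤ N)
    (a b s : ℝ) (ha : 0 < a) (hb : 0 < b) (hs : 0 < s)
    (hf0 : ∫⁻ x, f x ≠ 0) (hg0 : ∫⁻ x, g x ≠ 0)
    (H : ∀ x y, f x ≠ 0 → g y ≠ 0 → (ENNReal.ofReal a * f x ^ (1/s) + ENNReal.ofReal b * g y ^ (1/s)) ^ s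
      ≤ h (a * x + b * y)) :
    (ENNReal.ofReal a * (∫⁻ x, f x) ^ (1/(s+1)) + ENNReal.ofReal b * (∫⁻ x, g x) ^ (1/(s+1))) ^ (s+1)
      ≤ ∫⁻ x, h x := by
  have key : ∀ f : ℝ → ENNReal, ∫⁻ x, f x ≠ 0 → (∀ x, f x ≤ N) → (⨆ x, f x) ≠ 0 ∧ (⨆ x, f x) ≠ ⊤ := by
    intro f h0 h1
    constructor
    · intro h
      apply h0
      simp only [ENNReal.iSup_eq_zero] at h
      simp [h]
    · exact ((iSup_le h1).trans_lt (lt_top_iff_ne_top.2 hN)).ne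
  obtain ⟨hA0, hAt⟩ := key f hf0 f1
  obtain ⟨hB0, hBt⟩ := key g hg0 g1
  set A := ⨆ x, f x with hA
  set B := ⨆ x, g x with hB
  have ha' : ENNReal.ofReal a ≠ 0 := by simpa using ha
  refine (hold _ _ A B _ _ ENNReal.ofReal_ne_top ENNReal.ofReal_ne_top hA0 hAt hB0 hBt s hs).trans ?_
  set C := (ENNReal.ofReal a * A ^ (1/s) + ENNReal.ofReal b * B ^ (1/s)) ^ s with hC
  have hs' : 0 ≤ 1 / s := by positivity
  have hCt : C ≠ ⊤ := by
    apply ENNReal.rpow_ne_top_of_nonneg hs.le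
    apply ENNReal.add_ne_top.2 ⟨_, _⟩ <;> apply ENNReal.mul_ne_top ENNReal.ofReal_ne_top
    · exact ENNReal.rpow_ne_top_of_nonneg hs' hAt
    · exact ENNReal.rpow_ne_top_of_nonneg hs' hBt
  have hC0 : C ≠ 0 := by
    apply (ENNReal.rpow_pos _ _).ne'
    · apply lt_of_lt_of_le _ le_self_add
      exact ENNReal.mul_pos ha' (ENNReal.rpow_pos (pos_iff_ne_zero.2 hA0) hAt).ne'
    · intro h
      exact hCt (by rw [hC, h, ENNReal.top_rpow_of_pos hs])
  have main := L1 (fun x => A⁻¹ * f x) (fun x => B⁻¹ * g x) (fun x => C⁻¹ * h x)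
    (hf.const_mul _) (hg.const_mul _) (hh.const_mul _)
    (by rw [← ENNReal.mul_iSup, ENNReal.inv_mul_cancel hA0 hAt])
    (by rw [← ENNReal.mul_iSup, ENNReal.inv_mul_cancel hB0 hBt]) a b ha hb ?_
  · rw [lintegral_const_mul _ hf, lintegral_const_mul _ hg, lintegral_const_mul _ hh] at main
    calc _ ≤ C * (C⁻¹ * ∫⁻ x, h x) := by gcongr
      _ = _ := by rw [← mul_assoc, ENNReal.mul_inv_cancel hC0 hCt, one_mul]
  · intro x y
    by_cases hx : f x = 0
    · simp [hx]
    by_cases hy : g y = 0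
    · simp [hy]
    have hxy := H x y hx hy
    set m := min (A⁻¹ * f x) (B⁻¹ * g y) with hm
    have h1 : A * m ≤ f x := by
      calc A * m ≤ A * (A⁻¹ * f x) := by gcongr; exact min_le_left _ _
        _ = _ := by rw [← mul_assoc, ENNReal.mul_inv_cancel hA0 hAt, one_mul]
    have h2 : B * m ≤ g y := by
      calc B * m ≤ B * (B⁻¹ * g y) := by gcongr; exact min_le_right _ _
        _ = _ := by rw [← mul_assoc, ENNReal.mul_inv_cancel hB0 hBt, one_mul]
    have h3 : C * m ≤ h (a * x + b * y) := by
      refine le_trans ?_ hxy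
      calc C * m = (ENNReal.ofReal a * (A * m) ^ (1/s) + ENNReal.ofReal b * (B * m) ^ (1/s)) ^ s := by
            rw [ENNReal.mul_rpow_of_nonneg _ _ hs', ENNReal.mul_rpow_of_nonneg _ _ hs', ← mul_assoc,
              ← mul_assoc, ← add_mul, ENNReal.mul_rpow_of_nonneg _ _ hs.le, ← ENNReal.rpow_mul,
              one_div_mul_cancel hs.ne', ENNReal.rpow_one]
        _ ≤ _ := by gcongr
    calc m = C⁻¹ * (C * m) := by rw [← mul_assoc, ENNReal.inv_mul_cancel hC0 hCt, one_mul]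
      _ ≤ _ := by gcongr

lemma trunc (f : ℝ → ENNReal) (hf : Measurable f) :
    Filter.Tendsto (fun N : ℕ => ∫⁻ x, min (f x) ((N:ENNReal) + 1)) Filter.atTop (nhds (∫⁻ x, f x)) := by
  apply lintegral_tendsto_of_tendsto_of_monotone
  · intro N; exact (hf.min measurable_const).aemeasurable
  · refine Filter.Eventually.of_forall fun x => ?_
    intro N M h
    simp only
    gcongr
  · refine Filter.Eventually.of_forall fun x => ?_
    have h1 : Filter.Tendsto (fun N : ℕ => (N:ENNReal) + 1) Filter.atTop (nhds ⊤) := by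
      have := ENNReal.tendsto_nat_nhds_top.add_const (1 : ENNReal)
      simpa using this
    have := (tendsto_const_nhds (x := f x)).min h1
    simpa using this

lemma L3 (f g h : ℝ → ENNReal) (hf : Measurable f) (hg : Measurable g) (hh : Measurable h)
    (a b s : ℝ) (ha : 0 < a) (hb : 0 < b) (hs : 0 < s)
    (hf0 : ∫⁻ x, f x ≠ 0) (hg0 : ∫⁻ x, g x ≠ 0)
    (H : ∀ x y, f x ≠ 0 → g y ≠ 0 → (ENNReal.ofReal a * f x ^ (1/s) + ENNReal.ofReal b * g y ^ (1/s)) ^ s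
      ≤ h (a * x + b * y)) :
    (ENNReal.ofReal a * (∫⁻ x, f x) ^ (1/(s+1)) + ENNReal.ofReal b * (∫⁻ x, g x) ^ (1/(s+1))) ^ (s+1)
      ≤ ∫⁻ x, h x := by
  have T : Filter.Tendsto (fun N : ℕ => (ENNReal.ofReal a * (∫⁻ x, min (f x) ((N:ENNReal) + 1)) ^ (1/(s+1))
      + ENNReal.ofReal b * (∫⁻ x, min (g x) ((N:ENNReal) + 1)) ^ (1/(s+1))) ^ (s+1)) Filter.atTop
      (nhds ((ENNReal.ofReal a * (∫⁻ x, f x) ^ (1/(s+1)) + ENNReal.ofReal b * (∫⁻ x, g x) ^ (1/(s+1))) ^ (s+1))) := by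
    have key : ∀ (a : ℝ) (f : ℝ → ENNReal), Measurable f → Filter.Tendsto (fun N : ℕ => (ENNReal.ofReal a * (∫⁻ x, min (f x) ((N:ENNReal) + 1)) ^ (1/(s+1)))) Filter.atTop (nhds (ENNReal.ofReal a * (∫⁻ x, f x) ^ (1/(s+1)))) := by
      intro a f hf
      apply ENNReal.Tendsto.const_mul _ (Or.inr ENNReal.ofReal_ne_top)
      exact (ENNReal.continuous_rpow_const.tendsto _).comp (trunc f hf)
    exact (ENNReal.continuous_rpow_const.tendsto _).comp ((key a f hf).add (key b g hg))
  refine le_of_tendsto' T fun N => ?_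
  have nz : ∀ f : ℝ → ENNReal, Measurable f → ∫⁻ x, f x ≠ 0 → ∫⁻ x, min (f x) ((N:ENNReal) + 1) ≠ 0 := by
    intro f hf h0 h1
    apply h0
    rw [lintegral_eq_zero_iff (hf.min measurable_const)] at h1
    rw [lintegral_eq_zero_iff hf]
    filter_upwards [h1] with x hx
    simp only [Pi.zero_apply] at hx ⊢
    rcases min_eq_iff.1 hx with h | h
    · exact h.1
    · simp at h
  refine L2 _ _ h (hf.min measurable_const) (hg.min measurable_const) hh (N+1) (by finiteness)
    (fun x => min_le_right _ _) (fun x => min_le_right _ _) a b s ha hb hs (nz f hf hf0) (nz g hg hg0) ?_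
  intro x y hx hy
  have hx' : f x ≠ 0 := fun h => hx (by simp [h])
  have hy' : g y ≠ 0 := fun h => hy (by simp [h])
  refine le_trans ?_ (H x y hx' hy')
  have e : 0 ≤ 1/s := by positivity
  gcongr <;> exact min_le_left _ _

lemma psymm (n : ℕ) (x : ℝ) (y : Fin n → ℝ) :
    (MeasurableEquiv.piFinSuccAbove (fun _ : Fin (n+1) => ℝ) 0).symm (x, y) = Fin.cons x y := by
  ext i
  refine Fin.cases ?_ (fun j => ?_) i <;> simp [MeasurableEquiv.piFinSuccAbove]

lemma slice (n : ℕ) (f : (Fin (n+1) → ℝ) → ENNReal) (hf : Measurable f) :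
    ∫⁻ x, f x = ∫⁻ x : ℝ, ∫⁻ y : Fin n → ℝ, f (Fin.cons x y) := by
  have mp := (volume_preserving_piFinSuccAbove (fun _ : Fin (n+1) => ℝ) 0).symm
  rw [← mp.lintegral_comp hf]
  rw [Measure.volume_eq_prod, lintegral_prod]
  · simp only [psymm]
  · exact (hf.comp (MeasurableEquiv.measurable _)).aemeasurable

lemma mcons (n : ℕ) : Measurable (fun q : ℝ × (Fin n → ℝ) => (Fin.cons q.1 q.2 : Fin (n+1) → ℝ)) := by
  have := (MeasurableEquiv.piFinSuccAbove (fun _ : Fin (n+1) => ℝ) 0).symm.measurable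
  convert this using 2 with q
  exact (psymm n q.1 q.2).symm

lemma Ln (n : ℕ) (f g h : (Fin n → ℝ) → ENNReal) (hf : Measurable f) (hg : Measurable g) (hh : Measurable h)
    (a b s : ℝ) (ha : 0 < a) (hb : 0 < b) (hs : 0 < s)
    (hf0 : ∫⁻ x, f x ≠ 0) (hg0 : ∫⁻ x, g x ≠ 0)
    (H : ∀ x y, f x ≠ 0 → g y ≠ 0 → (ENNReal.ofReal a * f x ^ (1/s) + ENNReal.ofReal b * g y ^ (1/s)) ^ s
      ≤ h (a • x + b • y)) :
    (ENNReal.ofReal a * (∫⁻ x, f x) ^ (1/(n+s)) + ENNReal.ofReal b * (∫⁻ x, g x) ^ (1/(n+s))) ^ (n+s)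
      ≤ ∫⁻ x, h x := by
  induction n with
  | zero =>
    have key : ∀ f : (Fin 0 → ℝ) → ENNReal, ∫⁻ x, f x = f 0 := by
      intro f
      rw [lintegral_unique]
      simp [volume_pi]
      congr!
    rw [key] at *
    simp only [key]
    have := H 0 0 hf0 hg0
    simpa using this
  | succ n ih =>
    rw [slice n f hf] at hf0 ⊢
    rw [slice n g hg] at hg0 ⊢
    rw [slice n h hh]
    have e : ((n+1:ℕ):ℝ) + s = (n + s) + 1 := by push_cast; ring
    rw [e]
    refine L3 _ _ _ (hf.comp (mcons n)).lintegral_prod_right' (hg.comp (mcons n)).lintegral_prod_right'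
      (hh.comp (mcons n)).lintegral_prod_right' a b (n+s) ha hb (by positivity) hf0 hg0 ?_
    intro x y hx hy
    refine ih _ _ _ ((hf.comp (mcons n)).comp measurable_prodMk_left) ((hg.comp (mcons n)).comp measurable_prodMk_left) ((hh.comp (mcons n)).comp measurable_prodMk_left) hx hy ?_
    intro x' y' hx' hy'
    refine (H _ _ hx' hy').trans (le_of_eq ?_)
    simp only [Function.comp]
    congr 1
    ext i
    refine Fin.cases ?_ (fun j => ?_) i <;> simp

lemma Lreal (n : ℕ) (f g h : (Fin n → ℝ) → ℝ)
    (hf0 : ∀ x, 0 ≤ f x) (hg0 : ∀ x, 0 ≤ g x) (hh0 : ∀ x, 0 ≤ h x)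
    (hfi : Integrable f) (hgi : Integrable g) (hhi : Integrable h)
    (a b s : ℝ) (ha : 0 < a) (hb : 0 < b) (hs : 0 < s)
    (hf : 0 < ∫ x, f x) (hg : 0 < ∫ x, g x)
    (H : ∀ x y, 0 < f x → 0 < g y → (a * f x ^ (1/s) + b * g y ^ (1/s)) ^ s ≤ h (a • x + b • y)) :
    (a * (∫ x, f x) ^ (1/(n+s)) + b * (∫ x, g x) ^ (1/(n+s))) ^ (n+s) ≤ ∫ x, h x := by
  have hns : 0 < n + s := by positivity
  have hns' : 0 ≤ 1/(n + s) := by positivity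
  have hs' : 0 ≤ 1 / s := by positivity
  obtain ⟨f', mf, lf, ef⟩ := exists_measurable_le_lintegral_eq volume (fun x => ENNReal.ofReal (f x))
  obtain ⟨g', mg, lg, eg⟩ := exists_measurable_le_lintegral_eq volume (fun x => ENNReal.ofReal (g x))
  rw [← ofReal_integral_eq_lintegral_ofReal hfi (Filter.Eventually.of_forall hf0)] at ef
  rw [← ofReal_integral_eq_lintegral_ofReal hgi (Filter.Eventually.of_forall hg0)] at eg
  obtain ⟨h', mh, lh, eh⟩ : ∃ h' : (Fin n → ℝ) → ENNReal, Measurable h' ∧ (∀ x, ENNReal.ofReal (h x) ≤ h' x) ∧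
      ∫⁻ x, h' x = ENNReal.ofReal (∫ x, h x) := by
    rw [ofReal_integral_eq_lintegral_ofReal hhi (Filter.Eventually.of_forall hh0)]
    have am : AEMeasurable (fun x => ENNReal.ofReal (h x)) := hhi.aemeasurable.ennreal_ofReal
    have hz : volume {x | ¬ ENNReal.ofReal (h x) = am.mk _ x} = 0 := am.ae_eq_mk
    set K := toMeasurable volume {x | ¬ ENNReal.ofReal (h x) = am.mk _ x} with hK
    have hK0 : volume K = 0 := by rw [hK, measure_toMeasurable, hz]
    classical
    refine ⟨K.piecewise (fun _ => ⊤) (am.mk _), Measurable.piecewise (measurableSet_toMeasurable _ _) measurable_const am.measurable_mk, ?_, ?_⟩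
    · intro x
      by_cases hx : x ∈ K
      · simp [hx]
      · have : x ∉ {x | ¬ ENNReal.ofReal (h x) = am.mk _ x} := fun h => hx (subset_toMeasurable _ _ h)
        simp only [mem_ofPred_eq, not_not] at this
        simp [hx, this]
    · apply lintegral_congr_ae
      have : ∀ᵐ x, x ∉ K := measure_eq_zero_iff_ae_notMem.1 hK0
      filter_upwards [this, am.ae_eq_mk] with x hx h2
      simp [hx, h2]
  have main := Ln n f' g' h' mf mg mh a b s ha hb hs (by rw [← ef]; simpa using hf)
    (by rw [← eg]; simpa using hg) ?_
  · rw [← ef, ← eg, eh] at main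
    have hh1 : 0 ≤ ∫ x, h x := integral_nonneg hh0
    rw [← ENNReal.ofReal_le_ofReal_iff hh1]
    refine le_trans (le_of_eq ?_) main
    rw [ENNReal.ofReal_rpow_of_nonneg hf.le hns', ENNReal.ofReal_rpow_of_nonneg hg.le hns',
      ← ENNReal.ofReal_mul ha.le, ← ENNReal.ofReal_mul hb.le, ← ENNReal.ofReal_add (by positivity) (by positivity),
      ENNReal.ofReal_rpow_of_nonneg (by positivity) hns.le]
  · intro x y hx hy
    have h1 : f' x ≤ ENNReal.ofReal (f x) := lf x
    have h2 : g' y ≤ ENNReal.ofReal (g y) := lg y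
    have hx' : 0 < f x := by
      by_contra hc
      rw [ENNReal.ofReal_of_nonpos (not_lt.1 hc)] at h1
      exact hx (by simpa using h1)
    have hy' : 0 < g y := by
      by_contra hc
      rw [ENNReal.ofReal_of_nonpos (not_lt.1 hc)] at h2
      exact hy (by simpa using h2)
    refine le_trans ?_ ((ENNReal.ofReal_le_ofReal (H x y hx' hy')).trans (lh _))
    calc _ ≤ (ENNReal.ofReal a * ENNReal.ofReal (f x) ^ (1/s) + ENNReal.ofReal b * ENNReal.ofReal (g y) ^ (1/s)) ^ s := by
          gcongr
      _ = _ := by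
        rw [ENNReal.ofReal_rpow_of_nonneg hx'.le hs', ENNReal.ofReal_rpow_of_nonneg hy'.le hs',
          ← ENNReal.ofReal_mul ha.le, ← ENNReal.ofReal_mul hb.le, ← ENNReal.ofReal_add (by positivity) (by positivity),
          ENNReal.ofReal_rpow_of_nonneg (by positivity) hs.le]

lemma coef (p u A D : ℝ) (hp : 1 ≤ p) (hu : 0 < u) (hA : 0 < A) (hD : 0 < D) :
    u ^ (1/p) * (u * A ^ p / D) ^ ((p-1)/p) * A = u * A ^ p * D ^ (-((p-1)/p)) := by
  have hp0 : 0 < p := by linarith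
  rw [Real.div_rpow (by positivity) hD.le, Real.mul_rpow hu.le (by positivity), ← Real.rpow_mul hA.le,
    Real.rpow_neg hD.le]
  have e1 : u ^ (1/p) * u ^ ((p-1)/p) = u := by
    rw [← Real.rpow_add hu]
    have : 1/p + (p-1)/p = 1 := by field_simp; ring
    rw [this, Real.rpow_one]
  have e2 : A ^ (p * ((p-1)/p)) * A = A ^ p := by
    rw [← Real.rpow_add_one hA.ne']
    congr 1; field_simp; ring
  calc _ = (u ^ (1/p) * u ^ ((p-1)/p)) * (A ^ (p * ((p-1)/p)) * A) * (D ^ ((p-1)/p))⁻¹ := by ring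
    _ = _ := by rw [e1, e2]

/-- **The L_p-Borell–Brascamp–Lieb inequality.** -/
theorem lp_borell_brascamp_lieb
    (n : ℕ) (p s t : ℝ) (hp : 1 ≤ p) (hs : 0 < s) (ht : t ∈ Set.Icc (0:ℝ) 1)
    (f g h : (Fin n → ℝ) → ℝ)
    (hf0 : ∀ x, 0 ≤ f x) (hg0 : ∀ x, 0 ≤ g x) (hh0 : ∀ x, 0 ≤ h x)
    (hfb : ∃ M : ℝ, ∀ x, f x ≤ M) (hgb : ∃ M : ℝ, ∀ x, g x ≤ M)
    (hhb : ∃ M : ℝ, ∀ x, h x ≤ M)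
    (hfi : Integrable f) (hgi : Integrable g) (hhi : Integrable h)
    (hcond : ∀ x, 0 < f x → ∀ y, 0 < g y → ∀ l ∈ Set.Icc (0:ℝ) 1,
      ((1 - t) ^ (1/p) * (1 - l) ^ ((p-1)/p) * f x ^ (1/s)
          + t ^ (1/p) * l ^ ((p-1)/p) * g y ^ (1/s)) ^ s
        ≤ h (((1 - t) ^ (1/p) * (1 - l) ^ ((p-1)/p)) • x
              + (t ^ (1/p) * l ^ ((p-1)/p)) • y)) :
    Mmean (p / (n + s)) t (∫ x, f x) (∫ x, g x) ≤ ∫ x, h x := by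
  have hp0 : 0 < p := by linarith
  have hns : 0 < n + s := by positivity
  have hγ : p / (n + s) ≠ 0 := by positivity
  unfold Mmean
  split_ifs with hab
  swap
  · exact integral_nonneg hh0
  have hfn : 0 ≤ ∫ x, f x := integral_nonneg hf0
  have hgn : 0 ≤ ∫ x, g x := integral_nonneg hg0
  have hF : 0 < ∫ x, f x := pos_of_mul_pos_left hab hgn
  have hG : 0 < ∫ x, g x := pos_of_mul_pos_right hab hfn
  have ex : ∀ f : (Fin n → ℝ) → ℝ, (∀ x, 0 ≤ f x) → 0 < ∫ x, f x → ∃ x, 0 < f x := by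
    intro f h0 h1
    by_contra! hc
    have : f = 0 := funext fun x => le_antisymm (hc x) (h0 x)
    simp [this] at h1
  have hp1 : 1 / p ≠ 0 := by positivity
  have simp1 : ∀ r : ℝ, 0 ≤ r → (r ^ (1/s)) ^ s = r := fun r hr => by
    rw [← Real.rpow_mul hr, one_div_mul_cancel hs.ne', Real.rpow_one]
  rcases eq_or_lt_of_le ht.1 with h0 | h0
  · subst h0
    obtain ⟨y, hy⟩ := ex g hg0 hG
    have : ∫ x, f x ≤ ∫ x, h x := by
      refine integral_mono hfi hhi fun x => ?_
      rcases eq_or_lt_of_le (hf0 x) with hx | hx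
      · simpa [← hx] using hh0 x
      · have := hcond x hx y hy 0 (by simp)
        simpa [-one_div, Real.zero_rpow hp1, simp1 _ (hf0 x)] using this
    simpa [-one_div, ← Real.rpow_mul hfn, mul_one_div_cancel hγ] using this
  rcases eq_or_lt_of_le ht.2 with h1 | h1
  · subst h1
    obtain ⟨x, hx⟩ := ex f hf0 hF
    have : ∫ x, g x ≤ ∫ x, h x := by
      refine integral_mono hgi hhi fun y => ?_
      rcases eq_or_lt_of_le (hg0 y) with hy | hy
      · simpa [← hy] using hh0 y
      · have := hcond x hx y hy 1 (by simp)
        simpa [-one_div, Real.zero_rpow hp1, simp1 _ (hg0 y)] using this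
    simpa [-one_div, ← Real.rpow_mul hgn, mul_one_div_cancel hγ] using this
  have h1' : 0 < 1 - t := by linarith
  set F := ∫ x, f x
  set G := ∫ x, g x
  set A := F ^ (1/(n+s)) with hA
  set B := G ^ (1/(n+s)) with hB
  have hA0 : 0 < A := by positivity
  have hB0 : 0 < B := by positivity
  set D := (1-t) * A ^ p + t * B ^ p with hD
  have hD0 : 0 < D := by positivity
  have hl : 1 - t * B ^ p / D = (1-t) * A ^ p / D := by
    rw [eq_div_iff hD0.ne', sub_mul, div_mul_cancel₀ _ hD0.ne', hD]; ring
  have main := Lreal n f g h hf0 hg0 hh0 hfi hgi hhi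
    ((1 - t) ^ (1/p) * ((1-t) * A ^ p / D) ^ ((p-1)/p)) (t ^ (1/p) * (t * B ^ p / D) ^ ((p-1)/p)) s
    (by positivity) (by positivity) hs hF hG ?_
  · rw [← hA, ← hB, coef p _ A D hp h1' hA0 hD0, coef p _ B D hp h0 hB0 hD0, ← add_mul, ← hD] at main
    refine le_trans (le_of_eq ?_) main
    have e1 : F ^ (p / (n+s)) = A ^ p := by
      rw [hA, ← Real.rpow_mul hfn]; congr 1; ring
    have e2 : G ^ (p / (n+s)) = B ^ p := by
      rw [hB, ← Real.rpow_mul hgn]; congr 1; ring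
    rw [e1, e2, ← hD]
    have e3 : D * D ^ (-((p-1)/p)) = D ^ (1/p) := by
      nth_rewrite 1 [← Real.rpow_one D]
      rw [← Real.rpow_add hD0]; congr 1; field_simp; ring
    rw [e3, ← Real.rpow_mul hD0.le]
    congr 1; field_simp
  · intro x y hx hy
    have := hcond x hx y hy (t * B ^ p / D) ⟨by positivity, by
      have : 0 ≤ (1-t) * A ^ p / D := by positivity
      linarith⟩
    rw [hl] at this
    exact this
end

section
/- Let p > 1, t ∈ [0,1], and let μ = μ₁ × ⋯ × μ_n be a product measure on ℝ^n where each μ_i is a Borel measure on ℝ having a quasi-concave density φ_i with φ_i(0) = sup φ_i. Then for any nonempty weakly unconditional measurable sets A, B ⊆ ℝ^n such that (1−t) ·_p A +_p t ·_p B is measurable and all three measures are finite, one has μ((1−t) ·_p A +_p t ·_p B)^{p/n} ≥ (1−t) μ(A)^{p/n} + t μ(B)^{p/n}. -/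
open MeasureTheory Set

/-- The `L_p`-Minkowski combination `α ·_p A +_p β ·_p B`. -/
def lpComb {V : Type*} [AddCommGroup V] [Module ℝ V] (p α β : ℝ) (A B : Set V) : Set V :=
  {z | ∃ x ∈ A, ∃ y ∈ B, ∃ l ∈ Set.Icc (0:ℝ) 1,
    z = (α ^ (1/p) * (1 - l) ^ ((p-1)/p)) • x + (β ^ (1/p) * l ^ ((p-1)/p)) • y}

/-- A set `A ⊆ ℝ^n` is weakly unconditional if replacing any subset of the coordinates of any
of its points by `0` stays inside `A`. -/
def WeaklyUnconditionalSet {n : ℕ} (A : Set (Fin n → ℝ)) : Prop :=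
  ∀ x ∈ A, ∀ ε : Fin n → Bool, (fun i => if ε i then x i else 0) ∈ A

open scoped Pointwise

lemma amgm_aux (m : ℕ) (x c : ℝ) (hx : 0 ≤ x) (hc : 0 ≤ c) :
    (m + 1) * x * c ^ m ≤ x ^ (m+1) + m * c ^ (m+1) := by
  rcases hc.eq_or_lt with rfl | hc
  · rcases m with _ | m
    · simp
    · simp; positivity
  · have h := one_add_mul_sub_le_pow (a := x / c) (by linarith [div_nonneg hx hc.le]) (m+1)
    have h2 := mul_le_mul_of_nonneg_right h (pow_pos hc (m+1)).le
    rw [div_pow, div_mul_cancel₀ _ (by positivity)] at h2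
    have e : (1 + ((m+1:ℕ):ℝ) * (x / c - 1)) * c ^ (m+1) = (m+1) * x * c^m - m * c^(m+1) := by
      push_cast; field_simp; ring
    rw [e] at h2
    linarith

lemma holder_pt (m : ℕ) (U P x k : ℝ) (hU : 0 ≤ U) (hP : 0 ≤ P) (hx : 0 ≤ x) (hk : 0 ≤ k)
    (h : x ^ (m+1) ≤ U ^ m * P) : (m+1) * k ^ m * x - m * k ^ (m+1) * U ≤ P := by
  rcases hU.eq_or_lt with rfl | hU
  · rcases m with _ | m
    · simpa using h
    · have : x = 0 := by
        have h' : x ^ (m+1+1) ≤ 0 := by simpa using h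
        have := le_antisymm h' (by positivity)
        exact pow_eq_zero_iff (by omega) |>.1 this
      subst this; simpa using hP
  · have := amgm_aux m x (k * U) hx (by positivity)
    have h3 : ((m+1) * k ^ m * x - m * k ^ (m+1) * U) * U ^ m ≤ P * U ^ m := by
      have e : ((m+1) * k ^ m * x - m * k ^ (m+1) * U) * U ^ m
        = (m + 1) * x * (k * U) ^ m - m * (k * U) ^ (m+1) := by ring
      rw [e]; linarith
    exact le_of_mul_le_mul_right h3 (by positivity)

lemma holder_aux (m : ℕ) (a b U V P Q x y : ℝ) (ha : 0 ≤ a) (hb : 0 ≤ b)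
    (hU : 0 ≤ U) (hV : 0 ≤ V) (hP : 0 ≤ P) (hQ : 0 ≤ Q) (hx : 0 ≤ x) (hy : 0 ≤ y)
    (h1 : x ^ (m+1) ≤ U ^ m * P) (h2 : y ^ (m+1) ≤ V ^ m * Q) :
    (a * x + b * y) ^ (m+1) ≤ (a * U + b * V) ^ m * (a * P + b * Q) := by
  rcases m with _ | m
  · simp at *
    gcongr
  have hS : 0 ≤ a * U + b * V := by positivity
  rcases hS.eq_or_lt with hS | hS
  · have e1 : a * U = 0 := by nlinarith [mul_nonneg ha hU, mul_nonneg hb hV]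
    have e2 : b * V = 0 := by nlinarith [mul_nonneg ha hU, mul_nonneg hb hV]
    have key : ∀ a U P x : ℝ, 0 ≤ x → a * U = 0 → x ^ (m+1+1) ≤ U ^ (m+1) * P → a * x = 0 := by
      intro a U P x hx e h
      rcases mul_eq_zero.1 e with rfl | rfl
      · simp
      · have h' : x ^ (m+1+1) ≤ 0 := by simpa using h
        have := le_antisymm h' (by positivity)
        rw [pow_eq_zero_iff (by omega) |>.1 this]; simp
    rw [key a U P x hx e1 h1, key b V Q y hy e2 h2]
    simp
    positivity
  · set S := a * U + b * V
    set k := (a * x + b * y) / S with hkdef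
    have hk : 0 ≤ k := by positivity
    have hX : a * x + b * y = k * S := by rw [hkdef]; field_simp
    have g1 := mul_le_mul_of_nonneg_left (holder_pt _ U P x k hU hP hx hk h1) ha
    have g2 := mul_le_mul_of_nonneg_left (holder_pt _ V Q y k hV hQ hy hk h2) hb
    have g3 : k ^ (m+1+1) * S ≤ a * P + b * Q := by
      refine le_trans (le_of_eq ?_) (add_le_add g1 g2)
      have : a * ((((m+1:ℕ):ℝ)+1) * k ^ (m+1) * x - (m+1:ℕ) * k ^ (m+1+1) * U) +
        b * ((((m+1:ℕ):ℝ)+1) * k ^ (m+1) * y - (m+1:ℕ) * k ^ (m+1+1) * V) =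
        (((m+1:ℕ):ℝ)+1) * k ^ (m+1) * (a * x + b * y) - (m+1:ℕ) * k ^ (m+1+1) * S := by
        simp only [S]; ring
      rw [this, hX]; ring
    rw [hX]
    calc (k * S) ^ (m+1+1) = S ^ (m+1) * (k ^ (m+1+1) * S) := by ring
      _ ≤ _ := by gcongr

lemma bm1_compact (a b : ℝ) (ha : 0 ≤ a) (hb : 0 ≤ b) (K L C : Set ℝ)
    (hK : IsCompact K) (hL : IsCompact L) (hKn : K.Nonempty) (hLn : L.Nonempty)
    (h : ∀ x ∈ K, ∀ y ∈ L, a * x + b * y ∈ C) :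
    ENNReal.ofReal a * volume K + ENNReal.ofReal b * volume L ≤ volume C := by
  obtain ⟨M, hMK, hM⟩ := hK.exists_isGreatest hKn
  obtain ⟨l, hlL, hl⟩ := hL.exists_isLeast hLn
  have img : ∀ (r c : ℝ) (T : Set ℝ), 0 ≤ r → volume ((fun z => z + c) '' (r • T)) =
      ENNReal.ofReal r * volume T := by
    intro r c T hr
    rw [Set.image_add_right, measure_preimage_add_right, Measure.addHaar_smul]
    simp [abs_of_nonneg hr]
  have cpt : ∀ (r c : ℝ) (T : Set ℝ), IsCompact T → MeasurableSet ((fun z => z + c) '' (r • T)) := by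
    intro r c T hT
    exact ((hT.smul r).image (by fun_prop)).measurableSet
  rw [← img a (b * l) K ha, ← img b (a * M) L hb, ← measure_union_add_inter _ (cpt _ _ _ hL)]
  have hi : volume ((fun z => z + b * l) '' (a • K) ∩ (fun z => z + a * M) '' (b • L)) = 0 := by
    refine measure_mono_null (t := {a * M + b * l}) ?_ (by simp)
    rintro z ⟨⟨_, ⟨x, hx, rfl⟩, rfl⟩, ⟨_, ⟨y, hy, rfl⟩, hz⟩⟩
    simp only [smul_eq_mul, Set.mem_singleton_iff] at *
    have := mul_le_mul_of_nonneg_left (hM hx) ha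
    have := mul_le_mul_of_nonneg_left (hl hy) hb
    linarith
  rw [hi, add_zero]
  apply measure_mono
  rintro z (⟨_, ⟨x, hx, rfl⟩, rfl⟩ | ⟨_, ⟨y, hy, rfl⟩, rfl⟩)
  · exact h x hx l hlL
  · have := h M hMK y hy
    simp only [smul_eq_mul]
    rwa [add_comm]

lemma bm1_s4 (a b : ℝ) (ha : 0 ≤ a) (hb : 0 ≤ b) (A B C : Set ℝ)
    (hA : MeasurableSet A) (hB : MeasurableSet B) (hAn : A.Nonempty) (hBn : B.Nonempty)
    (h : ∀ x ∈ A, ∀ y ∈ B, a * x + b * y ∈ C) :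
    ENNReal.ofReal a * volume A + ENNReal.ofReal b * volume B ≤ volume C := by
  obtain ⟨x0, hx0⟩ := hAn
  obtain ⟨y0, hy0⟩ := hBn
  have key : ∀ K ⊆ A, IsCompact K → ∀ L ⊆ B, IsCompact L → 
      ENNReal.ofReal a * volume K + ENNReal.ofReal b * volume L ≤ volume C := by
    intro K hKA hK L hLB hL
    refine le_trans ?_ (bm1_compact a b ha hb (insert x0 K) (insert y0 L) C (hK.insert _)
      (hL.insert _) (by simp) (by simp) ?_)
    · gcongr <;> simp
    · intro x hx y hy
      exact h x (Set.insert_subset hx0 hKA hx) y (Set.insert_subset hy0 hLB hy)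
  rw [hA.measure_eq_iSup_isCompact, hB.measure_eq_iSup_isCompact]
  simp only [ENNReal.mul_iSup, iSup_and']
  refine ENNReal.biSup_add_biSup_le' ⟨∅, by simp⟩ ⟨∅, by simp⟩ ?_
  exact fun K hK L hL => key K hK.1 hK.2 L hL.1 hL.2

def GoodM (μ : Measure ℝ) : Prop := ∀ a b : ℝ, 0 ≤ a → 0 ≤ b → a + b ≤ 1 →
  ∀ A B C : Set ℝ, MeasurableSet A → MeasurableSet B → MeasurableSet C → (0:ℝ) ∈ A → (0:ℝ) ∈ B →
  (∀ x ∈ A, ∀ y ∈ B, a * x + b * y ∈ C) →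
  ENNReal.ofReal a * μ A + ENNReal.ofReal b * μ B ≤ μ C

lemma goodM (φ : ℝ → ℝ) (hφ0 : ∀ x, 0 ≤ φ x) (hφm : Measurable φ)
    (hφqc : ∀ x y : ℝ, ∀ τ ∈ Set.Icc (0:ℝ) 1,
      min (φ x) (φ y) ≤ φ ((1 - τ) * x + τ * y))
    (hφmax : ∀ x, φ x ≤ φ 0) :
    GoodM (volume.withDensity (fun x => ENNReal.ofReal (φ x))) := by
  intro a b ha hb hab A B C hA hB hC h0A h0B h
  have lc : ∀ T : Set ℝ, MeasurableSet T → 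
      (volume.withDensity (fun x => ENNReal.ofReal (φ x))) T
        = ∫⁻ s in Set.Ioi (0:ℝ), volume ({x | s ≤ φ x} ∩ T) := by
    intro T hT
    rw [withDensity_apply _ hT, lintegral_eq_lintegral_meas_le _ (ae_of_all _ hφ0) hφm.aemeasurable]
    refine lintegral_congr fun s => ?_
    rw [Measure.restrict_apply (measurableSet_le measurable_const hφm)]
  have ms : ∀ T : Set ℝ, Measurable fun s : ℝ => volume ({x | s ≤ φ x} ∩ T) := by
    intro T
    refine Antitone.measurable fun s s' hs => measure_mono ?_
    rintro x ⟨hx, hxT⟩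
    exact ⟨le_trans hs hx, hxT⟩
  rw [lc A hA, lc B hB, lc C hC, ← lintegral_const_mul _ (ms A), ← lintegral_const_mul _ (ms B),
    ← lintegral_add_left ((ms A).const_mul _)]
  refine lintegral_mono fun s => ?_
  have hm : MeasurableSet {x | s ≤ φ x} := measurableSet_le measurable_const hφm
  by_cases hs : s ≤ φ 0
  · apply bm1_s4 a b ha hb _ _ _ (hm.inter hA) (hm.inter hB) ⟨0, hs, h0A⟩ ⟨0, hs, h0B⟩
    rintro x ⟨hx, hxA⟩ y ⟨hy, hyB⟩
    refine ⟨?_, h x hxA y hyB⟩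
    -- first combine convexly then shrink
    have shrink : ∀ z c : ℝ, 0 ≤ c → c ≤ 1 → s ≤ φ z → s ≤ φ (c * z) := by
      intro z c hc hc1 hz
      have := hφqc 0 z c ⟨hc, hc1⟩
      simp only [mul_zero, zero_add] at this
      exact le_trans (le_min hs hz) this
    show s ≤ φ (a * x + b * y)
    rcases hb.eq_or_lt with rfl | hb'
    · simpa using shrink x a ha (by linarith) hx
    have hpos : 0 < a + b := by linarith
    have h1 := hφqc x y (b / (a + b)) ⟨by positivity, by rw [div_le_one hpos]; linarith⟩
    have h2 := shrink _ (a + b) hpos.le hab (le_trans (le_min hx hy) h1)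
    convert h2 using 2
    field_simp
    ring
  · have : ∀ T : Set ℝ, {x | s ≤ φ x} ∩ T = ∅ := by
      intro T
      ext x
      simp only [Set.mem_inter_iff, Set.mem_ofPred_eq, Set.mem_empty_iff_false, iff_false]
      rintro ⟨hx, -⟩
      exact hs (hx.trans (hφmax x))
    simp [this]

def secSet {m : ℕ} (A : Set (Fin (m+1) → ℝ)) (x : ℝ) : Set (Fin m → ℝ) :=
  {y | (Fin.cons x y : Fin (m+1) → ℝ) ∈ A}

lemma secSet_compact {m : ℕ} {A : Set (Fin (m+1) → ℝ)} (hA : IsCompact A) (x : ℝ) :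
    IsCompact (secSet A x) := by
  have : secSet A x = Fin.tail '' (A ∩ {z | z 0 = x}) := by
    ext y
    constructor
    · intro hy
      exact ⟨Fin.cons x y, ⟨hy, by simp⟩, by simp⟩
    · rintro ⟨z, ⟨hz, hz0⟩, rfl⟩
      show Fin.cons x (Fin.tail z) ∈ A
      have hz0' : z 0 = x := hz0
      rw [← hz0', Fin.cons_self_tail]
      exact hz
  rw [this]
  refine (hA.inter_right (isClosed_eq (by fun_prop) (by fun_prop))).image ?_
  unfold Fin.tail
  fun_prop

lemma secSet_wu {m : ℕ} {A : Set (Fin (m+1) → ℝ)} (hA : WeaklyUnconditionalSet A) (x : ℝ) :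
    WeaklyUnconditionalSet (secSet A x) := by
  intro y hy ε
  have := hA _ hy (Fin.cons true ε)
  show Fin.cons x _ ∈ A
  convert this using 1
  funext i
  refine Fin.cases ?_ (fun i => ?_) i <;> simp

lemma secSet_mono {m : ℕ} {A : Set (Fin (m+1) → ℝ)} (hA : WeaklyUnconditionalSet A) (x : ℝ) :
    secSet A x ⊆ secSet A 0 := by
  intro y hy
  have := hA _ hy (Fin.cons false (fun _ => true))
  show Fin.cons 0 _ ∈ A
  convert this using 1
  funext i
  refine Fin.cases ?_ (fun i => ?_) i <;> simp

lemma pi_secSet {m : ℕ} (μ : Fin (m+1) → Measure ℝ) [∀ i, SigmaFinite (μ i)]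
    {A : Set (Fin (m+1) → ℝ)} (hA : MeasurableSet A) :
    Measure.pi μ A = ∫⁻ x, Measure.pi (fun j : Fin m => μ j.succ) (secSet A x) ∂(μ 0) ∧
    Measurable (fun x => Measure.pi (fun j : Fin m => μ j.succ) (secSet A x)) := by
  have h := measurePreserving_piFinSuccAbove μ 0
  have h2 := h.symm
  have e := h2.measure_preimage hA.nullMeasurableSet
  have hm := h2.measurable hA
  have es : ∀ x, Prod.mk x ⁻¹' ((MeasurableEquiv.piFinSuccAbove (fun _ => ℝ) 0).symm ⁻¹' A)
     = secSet A x := by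
    intro x
    ext y
    simp [secSet, MeasurableEquiv.piFinSuccAbove_symm_apply, Fin.insertNthEquiv]
  constructor
  · rw [← e, Measure.prod_apply hm]
    simp only [es, Fin.succAbove_zero]
  · have := measurable_measure_prodMk_left (ν := Measure.pi (fun j : Fin m => μ j.succ)) hm
    simpa only [es] using this

lemma layer_s4 (μ : Measure ℝ) (f : ℝ → ENNReal) (hf : Measurable f) (hft : ∀ x, f x ≠ ⊤) (F : ℝ)
    (hF : 0 < F) : ∫⁻ x, f x ∂μ
      = ENNReal.ofReal F * ∫⁻ r in Set.Ioi (0:ℝ), μ {x | ENNReal.ofReal (r * F) ≤ f x} := by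
  have h := lintegral_eq_lintegral_meas_le μ (f := fun x => (f x).toReal / F)
    (ae_of_all _ fun x => by simp only [Pi.zero_apply]; positivity)
    (hf.ennreal_toReal.div_const F).aemeasurable
  have e1 : ∀ x, f x = ENNReal.ofReal F * ENNReal.ofReal ((f x).toReal / F) := by
    intro x
    rw [← ENNReal.ofReal_mul hF.le, mul_div_cancel₀ _ hF.ne', ENNReal.ofReal_toReal (hft x)]
  rw [lintegral_congr e1, lintegral_const_mul _ (hf.ennreal_toReal.div_const F).ennreal_ofReal, h]
  congr 1
  refine lintegral_congr fun r => ?_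
  congr 1
  ext x
  show r ≤ (f x).toReal / F ↔ ENNReal.ofReal (r * F) ≤ f x
  rw [le_div_iff₀ hF, ENNReal.ofReal_le_iff_le_toReal (hft x)]

lemma zero_mem_of_wu {n : ℕ} {A : Set (Fin n → ℝ)} (hA : WeaklyUnconditionalSet A)
    (hn : A.Nonempty) : (0 : Fin n → ℝ) ∈ A := by
  obtain ⟨x, hx⟩ := hn
  have := hA x hx (fun _ => false)
  simp only [Bool.false_eq_true, if_false] at this
  exact this

lemma pi_zero_dim (μ : Fin 0 → Measure ℝ) (S : Set (Fin 0 → ℝ)) (hS : S.Nonempty) :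
    Measure.pi μ S = 1 := by
  have : S = Set.univ := Subsingleton.eq_univ_of_nonempty hS
  rw [this]
  simp

lemma levelP {m : ℕ} (μ : Fin (m+1) → Measure ℝ) [∀ i, SigmaFinite (μ i)]
    [∀ i, IsLocallyFiniteMeasure (μ i)] (A : Set (Fin (m+1) → ℝ)) (hA : IsCompact A)
    (hAn : A.Nonempty) (hAu : WeaklyUnconditionalSet A) :
    ∃ (U P : ℝ) (Ar : ℝ → Set ℝ), 0 ≤ U ∧ 0 ≤ P ∧
      (∀ r, MeasurableSet (Ar r)) ∧ (∀ r ≤ 1, (0:ℝ) ∈ Ar r) ∧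
      (∀ r, ∀ x ∈ Ar r, (secSet A x).Nonempty ∧ ∀ ρ : ℝ, (m = 0 ∨ ρ ^ m = r) →
        ENNReal.ofReal ((ρ * U) ^ m) ≤ Measure.pi (fun j : Fin m => μ j.succ) (secSet A x)) ∧
      Measurable (fun r => μ 0 (Ar r)) ∧
      ∫⁻ r in Set.Ioc (0:ℝ) 1, μ 0 (Ar r) = ENNReal.ofReal P ∧
      Measure.pi μ A ≤ ENNReal.ofReal (U ^ m * P) := by
  set f : ℝ → ENNReal := fun x => Measure.pi (fun j : Fin m => μ j.succ) (secSet A x) with hf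
  obtain ⟨hI, hfm⟩ := pi_secSet μ hA.measurableSet
  have hft : ∀ x, f x ≠ ⊤ := fun x => (secSet_compact hA x).measure_ne_top
  have hf0 : ∀ x, f x ≤ f 0 := fun x => measure_mono (secSet_mono hAu x)
  set F : ℝ := (f 0).toReal with hF
  have hF0 : 0 ≤ F := ENNReal.toReal_nonneg
  have hFf : ENNReal.ofReal F = f 0 := ENNReal.ofReal_toReal (hft 0)
  have h0ne : (secSet A 0).Nonempty := by
    refine ⟨0, ?_⟩
    have := zero_mem_of_wu hAu hAn
    show Fin.cons 0 0 ∈ A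
    convert this using 1
    funext i
    refine Fin.cases ?_ (fun i => ?_) i <;> simp
  obtain ⟨U, hU0, hU⟩ : ∃ U : ℝ, 0 ≤ U ∧ U ^ m = F := by
    rcases m with _ | m
    · refine ⟨1, zero_le_one, ?_⟩
      rw [hF, hf]
      simp only
      rw [pi_zero_dim _ _ h0ne]
      simp
    · refine ⟨F ^ (1 / ((m+1:ℕ):ℝ)), by positivity, ?_⟩
      rw [one_div, Real.rpow_inv_natCast_pow hF0 (by omega)]
  set prj : Set ℝ := (fun z : Fin (m+1) → ℝ => z 0) '' A with hprj
  have hprjc : IsCompact prj := hA.image (by fun_prop)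
  have hsp : ∀ x, (secSet A x).Nonempty ↔ x ∈ prj := by
    intro x
    constructor
    · rintro ⟨y, hy⟩
      exact ⟨_, hy, by simp⟩
    · rintro ⟨z, hz, rfl⟩
      refine ⟨Fin.tail z, ?_⟩
      show Fin.cons (z 0) (Fin.tail z) ∈ A
      rwa [Fin.cons_self_tail]
  set Ar : ℝ → Set ℝ := fun r => prj ∩ {x | ENNReal.ofReal (r * F) ≤ f x} with hAr
  have hmeas : Measurable (fun r => μ 0 (Ar r)) := by
    refine Antitone.measurable fun s s' hs => measure_mono ?_
    rintro x ⟨hx1, hx2⟩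
    refine ⟨hx1, ?_⟩
    show ENNReal.ofReal (s * F) ≤ f x
    refine le_trans (ENNReal.ofReal_le_ofReal ?_) hx2
    exact mul_le_mul_of_nonneg_right hs hF0
  have hPt : ∫⁻ r in Set.Ioc (0:ℝ) 1, μ 0 (Ar r) ≠ ⊤ := by
    refine ne_top_of_le_ne_top (hprjc.measure_ne_top (μ := μ 0)) ?_
    calc ∫⁻ r in Set.Ioc (0:ℝ) 1, μ 0 (Ar r) ≤ ∫⁻ r in Set.Ioc (0:ℝ) 1, μ 0 prj :=
          lintegral_mono fun r => measure_mono Set.inter_subset_left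
      _ = μ 0 prj := by simp
  refine ⟨U, (∫⁻ r in Set.Ioc (0:ℝ) 1, μ 0 (Ar r)).toReal, Ar, hU0, ENNReal.toReal_nonneg,
    ?_, ?_, ?_, hmeas, (ENNReal.ofReal_toReal hPt).symm, ?_⟩
  · intro r
    exact hprjc.measurableSet.inter (measurableSet_le measurable_const hfm)
  · intro r hr
    refine ⟨(hsp 0).1 h0ne, ?_⟩
    show ENNReal.ofReal (r * F) ≤ f 0
    rw [← hFf]
    apply ENNReal.ofReal_le_ofReal
    nlinarith
  · rintro r x ⟨hx1, hx2⟩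
    refine ⟨(hsp x).2 hx1, ?_⟩
    rintro ρ (rfl | hρ)
    · rw [pi_zero_dim _ _ ((hsp x).2 hx1)]
      simp
    · rw [mul_pow, hρ, hU]
      exact hx2
  · rw [ENNReal.ofReal_mul (by positivity), ENNReal.ofReal_toReal hPt, hU, hI]
    rcases hF0.eq_or_lt with h0 | hpos
    · have : ∀ x, f x = 0 := by
        intro x
        have := hf0 x
        rw [← hFf, ← h0] at this
        simpa using this
      have e : ∫⁻ x, f x ∂(μ 0) = 0 := by simp [this]
      rw [e]
      exact bot_le
    · rw [layer_s4 (μ 0) f hfm hft F hpos]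
      refine mul_le_mul_right ?_ _
      rw [← Set.Ioc_union_Ioi_eq_Ioi (zero_le_one' ℝ),
        lintegral_union measurableSet_Ioi (by
          rw [Set.disjoint_left]; intro x hx hx'; exact absurd hx.2 (not_le.2 hx'))]
      have z : ∫⁻ r in Set.Ioi (1:ℝ), μ 0 {x | ENNReal.ofReal (r * F) ≤ f x} = 0 := by
        rw [setLIntegral_congr_fun (g := fun _ => 0) measurableSet_Ioi]
        · simp
        · intro r hr
          have : {x | ENNReal.ofReal (r * F) ≤ f x} = ∅ := by
            ext x
            simp only [Set.mem_empty_iff_false, iff_false]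
            intro hx
            have h1 : ENNReal.ofReal (r * F) ≤ ENNReal.ofReal F := by
              rw [hFf]; exact le_trans hx (hf0 x)
            rw [ENNReal.ofReal_le_ofReal_iff hF0] at h1
            have : (1:ℝ) < r := hr
            nlinarith
          simp only [this, measure_empty]
      rw [z, add_zero]
      refine setLIntegral_mono' measurableSet_Ioc fun r hr => measure_mono ?_
      intro x hx
      refine ⟨(hsp x).1 ?_, hx⟩
      by_contra hne
      rw [Set.not_nonempty_iff_eq_empty] at hne
      have hx' : ENNReal.ofReal (r * F) ≤ f x := hx
      have hfx : f x = 0 := by simp [hf, hne]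
      rw [hfx] at hx'
      have : 0 < r * F := mul_pos hr.1 hpos
      simp at hx'
      linarith

lemma core (a b : ℝ) (ha : 0 ≤ a) (hb : 0 ≤ b) (hab : a + b ≤ 1) :
    ∀ (n : ℕ) (μ : Fin n → Measure ℝ) [∀ i, SigmaFinite (μ i)]
    [∀ i, IsLocallyFiniteMeasure (μ i)] (_ : ∀ i, GoodM (μ i)) (A B : Set (Fin n → ℝ))
    (_ : IsCompact A) (_ : IsCompact B) (_ : A.Nonempty) (_ : B.Nonempty)
    (_ : WeaklyUnconditionalSet A) (_ : WeaklyUnconditionalSet B) (u v : ℝ) (_ : 0 ≤ u) (_ : 0 ≤ v)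
    (_ : ENNReal.ofReal (u ^ n) ≤ Measure.pi μ A) (_ : ENNReal.ofReal (v ^ n) ≤ Measure.pi μ B),
    ENNReal.ofReal ((a * u + b * v) ^ n) ≤ Measure.pi μ (a • A + b • B) := by
  intro n
  induction n with
  | zero =>
    intro μ _ _ _ A B _ _ hAn hBn _ _ u v _ _ _ _
    rw [pi_zero_dim _ _ (hAn.smul_set.add hBn.smul_set)]
    simp
  | succ m ih =>
    intro μ _ _ hg A B hA hB hAn hBn hAu hBu u v hu hv huA hvB
    obtain ⟨U, P, Ar, hU, hP, hAm, hA0, hAs, hAmeas, hAP, hAle⟩ := levelP μ A hA hAn hAu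
    obtain ⟨V, Q, Br, hV, hQ, hBm, hB0, hBs, hBmeas, hBQ, hBle⟩ := levelP μ B hB hBn hBu
    have e1 : u ^ (m+1) ≤ U ^ m * P :=
      (ENNReal.ofReal_le_ofReal_iff (by positivity)).1 (huA.trans hAle)
    have e2 : v ^ (m+1) ≤ V ^ m * Q :=
      (ENNReal.ofReal_le_ofReal_iff (by positivity)).1 (hvB.trans hBle)
    refine le_trans (ENNReal.ofReal_le_ofReal
      (holder_aux m a b U V P Q u v ha hb hU hV hP hQ hu hv e1 e2)) ?_
    set H := (a * U + b * V) ^ m with hH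
    have hH0 : 0 ≤ H := by positivity
    rcases hH0.eq_or_lt with h0 | hpos
    · rw [← h0]; simp
    have hC : IsCompact (a • A + b • B) := (hA.smul a).add (hB.smul b)
    obtain ⟨hI, hfm⟩ := pi_secSet μ hC.measurableSet
    rw [hI, layer_s4 (μ 0) _ hfm (fun x => (secSet_compact hC x).measure_ne_top) H hpos,
      ENNReal.ofReal_mul hH0, ENNReal.ofReal_add (by positivity) (by positivity),
      ENNReal.ofReal_mul ha, ENNReal.ofReal_mul hb, ← hAP, ← hBQ,
      ← lintegral_const_mul _ hAmeas, ← lintegral_const_mul _ hBmeas,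
      ← lintegral_add_left (hAmeas.const_mul _)]
    refine mul_le_mul_right ?_ _
    refine le_trans ?_ (lintegral_mono_set (Set.Ioc_subset_Ioi_self (a := (1:ℝ)) (b := 0)))
    refine setLIntegral_mono' measurableSet_Ioc fun r hr => ?_
    refine hg 0 a b ha hb hab _ _ _ (hAm r) (hBm r) (measurableSet_le measurable_const hfm)
      (hA0 r hr.2) (hB0 r hr.2) ?_
    intro x hx y hy
    obtain ⟨hxn, hx⟩ := hAs r x hx
    obtain ⟨hyn, hy⟩ := hBs r y hy
    obtain ⟨ρ, hρ0, hρr, hρ⟩ : ∃ ρ : ℝ, 0 ≤ ρ ∧ r ≤ ρ ^ m ∧ (m = 0 ∨ ρ ^ m = r) := by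
      rcases Nat.eq_zero_or_pos m with rfl | hm
      · exact ⟨0, le_rfl, by simpa using hr.2, Or.inl rfl⟩
      · have : (r ^ ((m:ℝ)⁻¹)) ^ m = r := Real.rpow_inv_natCast_pow hr.1.le (by omega)
        exact ⟨r ^ ((m:ℝ)⁻¹), Real.rpow_nonneg hr.1.le _, this.ge, Or.inr this⟩
    have key := ih (fun j => μ j.succ) (fun j => hg _) (secSet A x) (secSet B y)
      (secSet_compact hA x) (secSet_compact hB y) hxn hyn (secSet_wu hAu x) (secSet_wu hBu y)
      (ρ * U) (ρ * V) (by positivity) (by positivity) (hx ρ hρ) (hy ρ hρ)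
    show ENNReal.ofReal (r * H) ≤ _
    refine le_trans (ENNReal.ofReal_le_ofReal ?_) (key.trans (measure_mono ?_))
    · have : (a * (ρ * U) + b * (ρ * V)) ^ m = ρ ^ m * H := by
        rw [hH, ← mul_pow]; ring
      rw [this]
      gcongr
    · rintro _ ⟨_, ⟨z, hz, rfl⟩, _, ⟨w, hw, rfl⟩, rfl⟩
      refine ⟨_, ⟨_, hz, rfl⟩, _, ⟨_, hw, rfl⟩, ?_⟩
      funext i
      refine Fin.cases ?_ (fun i => ?_) i <;> simp

lemma wuHull {n : ℕ} (K A : Set (Fin n → ℝ)) (hK : IsCompact K) (hKA : K ⊆ A)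
    (hA : WeaklyUnconditionalSet A) :
    ∃ K' , K ⊆ K' ∧ K' ⊆ A ∧ IsCompact K' ∧ WeaklyUnconditionalSet K' := by
  refine ⟨⋃ ε : Fin n → Bool, (fun (x : Fin n → ℝ) i => if ε i then x i else 0) '' K,
    ?_, ?_, ?_, ?_⟩
  · intro x hx
    exact Set.mem_iUnion.2 ⟨fun _ => true, x, hx, by simp⟩
  · intro z hz
    obtain ⟨ε, x, hx, rfl⟩ := Set.mem_iUnion.1 hz
    exact hA x (hKA hx) ε
  · refine isCompact_iUnion fun ε => hK.image ?_
    refine continuous_pi fun i => ?_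
    by_cases h : ε i
    · simp only [h, if_true]; fun_prop
    · simp only [h, Bool.false_eq_true, if_false]; fun_prop
  · intro z hz δ
    obtain ⟨ε, x, hx, rfl⟩ := Set.mem_iUnion.1 hz
    refine Set.mem_iUnion.2 ⟨fun i => δ i && ε i, x, hx, ?_⟩
    funext i
    by_cases h : ε i <;> by_cases h' : δ i <;> simp [h, h']

lemma approxA {n : ℕ} (hn : n ≠ 0) (μ : Fin n → Measure ℝ) [∀ i, SigmaFinite (μ i)]
    [∀ i, IsLocallyFiniteMeasure (μ i)] (A : Set (Fin n → ℝ)) (hA : MeasurableSet A)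
    (hAn : A.Nonempty) (hAu : WeaklyUnconditionalSet A) (hAfin : Measure.pi μ A ≠ ⊤) (u : ℝ)
    (hu : 0 ≤ u) (huA : u ^ n = (Measure.pi μ A).toReal) (c : ℝ) (hc0 : 0 ≤ c) (hc1 : c < 1) :
    ∃ K ⊆ A, IsCompact K ∧ K.Nonempty ∧ WeaklyUnconditionalSet K ∧
      ENNReal.ofReal ((c * u) ^ n) ≤ Measure.pi μ K := by
  obtain ⟨x0, hx0⟩ := hAn
  obtain ⟨K, hKA, hK, hle⟩ : ∃ K ⊆ A, IsCompact K ∧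
      ENNReal.ofReal ((c * u) ^ n) ≤ Measure.pi μ K := by
    rcases hu.eq_or_lt with rfl | hpos
    · exact ⟨∅, by simp, by simp, by simp [hn]⟩
    · have : ENNReal.ofReal ((c * u) ^ n) < Measure.pi μ A := by
        rw [← ENNReal.ofReal_toReal hAfin, ← huA]
        refine (ENNReal.ofReal_lt_ofReal_iff (by positivity)).2 ?_
        exact pow_lt_pow_left₀ (by nlinarith) (by positivity) hn
      obtain ⟨K, h1, h2, h3⟩ := hA.exists_lt_isCompact_of_ne_top hAfin this
      exact ⟨K, h1, h2, h3.le⟩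
  obtain ⟨K', h1, h2, h3, h4⟩ := wuHull (insert x0 K) A (hK.insert _)
    (Set.insert_subset hx0 hKA) hAu
  exact ⟨K', h2, h3, ⟨x0, h1 (by simp)⟩, h4,
    hle.trans (measure_mono ((Set.subset_insert _ _).trans h1))⟩

lemma core2 {n : ℕ} (hn : n ≠ 0) (a b : ℝ) (ha : 0 ≤ a) (hb : 0 ≤ b) (hab : a + b ≤ 1)
    (μ : Fin n → Measure ℝ) [∀ i, SigmaFinite (μ i)]
    [∀ i, IsLocallyFiniteMeasure (μ i)] (hg : ∀ i, GoodM (μ i)) (A B D : Set (Fin n → ℝ))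
    (hA : MeasurableSet A) (hB : MeasurableSet B)
    (hAn : A.Nonempty) (hBn : B.Nonempty)
    (hAu : WeaklyUnconditionalSet A) (hBu : WeaklyUnconditionalSet B)
    (hAfin : Measure.pi μ A ≠ ⊤) (hBfin : Measure.pi μ B ≠ ⊤) (hDfin : Measure.pi μ D ≠ ⊤)
    (u v : ℝ) (hu : 0 ≤ u) (hv : 0 ≤ v) (huA : u ^ n = (Measure.pi μ A).toReal)
    (hvB : v ^ n = (Measure.pi μ B).toReal) (hD : a • A + b • B ⊆ D) :
    (a * u + b * v) ^ n ≤ (Measure.pi μ D).toReal := by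
  have key : ∀ c ∈ Set.Ioo (0:ℝ) 1, (c * (a * u + b * v)) ^ n ≤ (Measure.pi μ D).toReal := by
    rintro c ⟨hc0, hc1⟩
    obtain ⟨K, hKA, hK, hKn, hKu, hKm⟩ := approxA hn μ A hA hAn hAu hAfin u hu huA c hc0.le hc1
    obtain ⟨L, hLB, hL, hLn, hLu, hLm⟩ := approxA hn μ B hB hBn hBu hBfin v hv hvB c hc0.le hc1
    have := core a b ha hb hab n μ hg K L hK hL hKn hLn hKu hLu (c * u) (c * v)
      (by positivity) (by positivity) hKm hLm
    rw [← ENNReal.ofReal_le_iff_le_toReal hDfin]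
    have e : c * (a * u + b * v) = a * (c * u) + b * (c * v) := by ring
    rw [e]
    refine this.trans (measure_mono (subset_trans ?_ hD))
    exact Set.add_subset_add (Set.smul_set_mono hKA) (Set.smul_set_mono hLB)
  have hcont : Filter.Tendsto (fun c : ℝ => (c * (a * u + b * v)) ^ n) (nhdsWithin 1 (Set.Iio 1))
      (nhds ((1 * (a * u + b * v)) ^ n)) := by
    apply Filter.Tendsto.mono_left _ nhdsWithin_le_nhds
    exact Continuous.tendsto (by fun_prop) 1
  rw [one_mul] at hcont
  refine le_of_tendsto hcont ?_
  filter_upwards [Ioo_mem_nhdsLT (zero_lt_one' ℝ)] with c hc using key c hc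

lemma locFin (φ : ℝ → ℝ) (hφmax : ∀ x, φ x ≤ φ 0) :
    IsLocallyFiniteMeasure (volume.withDensity (fun x => ENNReal.ofReal (φ x))) := by
  have h : volume.withDensity (fun x => ENNReal.ofReal (φ x)) ≤
      (φ 0).toNNReal • (volume : Measure ℝ) := by
    refine (withDensity_mono (g := fun _ => ENNReal.ofReal (φ 0))
      (ae_of_all _ fun x => ENNReal.ofReal_le_ofReal (hφmax x))).trans ?_
    rw [withDensity_const]
    exact le_rfl
  exact Measure.isLocallyFiniteMeasure_of_le h

lemma term_aux (p s X S : ℝ) (hp : 1 < p) (hs : 0 ≤ s) (hX : 0 ≤ X) (hS : 0 < S) :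
    s ^ (1/p) * (s * X ^ p / S) ^ ((p-1)/p) * X = s * X ^ p / S ^ ((p-1)/p) := by
  have hp0 : p ≠ 0 := by linarith
  have hc : 0 ≤ s * X ^ p := by positivity
  have e1 : s ^ (1/p) * X = (s * X ^ p) ^ (1/p) := by
    rw [Real.mul_rpow hs (by positivity), ← Real.rpow_mul hX, mul_one_div_cancel hp0,
      Real.rpow_one]
  have e2 : (s * X ^ p) ^ (1/p) * (s * X ^ p) ^ ((p-1)/p) = s * X ^ p := by
    rw [← Real.rpow_add_of_nonneg hc (by positivity)
      (div_nonneg (by linarith) (by linarith)), ← add_div]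
    simp [hp0]
  rw [Real.div_rpow hc hS.le]
  calc _ = (s ^ (1/p) * X) * (s * X ^ p) ^ ((p-1)/p) / S ^ ((p-1)/p) := by ring
    _ = _ := by rw [e1, e2]

/-- **L_p-Brunn–Minkowski inequality for product measures with quasi-concave densities.** -/
theorem lp_brunn_minkowski_product_quasiconcave
    (n : ℕ) (p t : ℝ) (hp : 1 < p) (ht : t ∈ Set.Icc (0:ℝ) 1)
    (μ : Fin n → Measure ℝ) [∀ i, SigmaFinite (μ i)]
    (φ : Fin n → ℝ → ℝ) (hφ0 : ∀ i x, 0 ≤ φ i x) (hφm : ∀ i, Measurable (φ i))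
    (hμ : ∀ i, μ i = volume.withDensity (fun x => ENNReal.ofReal (φ i x)))
    (hφqc : ∀ i, ∀ x y : ℝ, ∀ τ ∈ Set.Icc (0:ℝ) 1,
      min (φ i x) (φ i y) ≤ φ i ((1 - τ) * x + τ * y))
    (hφmax : ∀ i x, φ i x ≤ φ i 0)
    (A B : Set (Fin n → ℝ)) (hAne : A.Nonempty) (hBne : B.Nonempty)
    (hA : MeasurableSet A) (hB : MeasurableSet B)
    (hAu : WeaklyUnconditionalSet A) (hBu : WeaklyUnconditionalSet B)
    (hABm : MeasurableSet (lpComb p (1 - t) t A B))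
    (hAfin : (Measure.pi μ) A ≠ ⊤) (hBfin : (Measure.pi μ) B ≠ ⊤)
    (hABfin : (Measure.pi μ) (lpComb p (1 - t) t A B) ≠ ⊤) :
    (1 - t) * ((Measure.pi μ) A).toReal ^ (p / n)
        + t * ((Measure.pi μ) B).toReal ^ (p / n)
      ≤ ((Measure.pi μ) (lpComb p (1 - t) t A B)).toReal ^ (p / n) := by
  rcases Nat.eq_zero_or_pos n with rfl | hnpos
  · simp
  have hn : n ≠ 0 := by omega
  have hnR : (n:ℝ) ≠ 0 := by exact_mod_cast hn
  have hnR0 : (0:ℝ) < n := by exact_mod_cast hnpos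
  have hp0 : 0 < p := by linarith
  have : ∀ i, IsLocallyFiniteMeasure (μ i) := fun i => by
    rw [hμ i]; exact locFin (φ i) (hφmax i)
  have hg : ∀ i, GoodM (μ i) := fun i => by
    rw [hμ i]; exact goodM (φ i) (hφ0 i) (hφm i) (hφqc i) (hφmax i)
  obtain ⟨ht0, ht1⟩ := ht
  have ht1' : 0 ≤ 1 - t := by linarith
  have root : ∀ z : ℝ, 0 ≤ z → ∃ X : ℝ, 0 ≤ X ∧ X ^ n = z ∧ z ^ (p / n) = X ^ p := by
    intro z hz
    refine ⟨z ^ ((n:ℝ)⁻¹), by positivity, Real.rpow_inv_natCast_pow hz hn, ?_⟩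
    rw [← Real.rpow_mul hz]
    congr 1
    field_simp
  obtain ⟨X, hX, hXA, eX⟩ := root ((Measure.pi μ) A).toReal ENNReal.toReal_nonneg
  obtain ⟨Y, hY, hYB, eY⟩ := root ((Measure.pi μ) B).toReal ENNReal.toReal_nonneg
  obtain ⟨Z, hZ, hZC, eZ⟩ := root ((Measure.pi μ) (lpComb p (1 - t) t A B)).toReal
    ENNReal.toReal_nonneg
  rw [eX, eY, eZ]
  set S := (1 - t) * X ^ p + t * Y ^ p with hSdef
  have hS0 : 0 ≤ S := by positivity
  rcases hS0.eq_or_lt with h0 | hS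
  · rw [← h0]; positivity
  set l := t * Y ^ p / S with hl
  have hl0 : 0 ≤ l := by positivity
  have hl1 : 1 - l = (1 - t) * X ^ p / S := by
    rw [hl]; field_simp; rw [hSdef]; ring
  have hl1' : 0 ≤ 1 - l := by rw [hl1]; positivity
  have hq0 : 0 ≤ (p-1)/p := div_nonneg (by linarith) hp0.le
  have hpq : 1/p + (p-1)/p = 1 := by field_simp; ring
  set a := (1 - t) ^ (1/p) * (1 - l) ^ ((p-1)/p) with ha
  set b := t ^ (1/p) * l ^ ((p-1)/p) with hb
  have ha0 : 0 ≤ a := by positivity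
  have hb0 : 0 ≤ b := by positivity
  have hab : a + b ≤ 1 := by
    have g1 := Real.geom_mean_le_arith_mean2_weighted (one_div_nonneg.2 hp0.le) hq0 ht1' hl1' hpq
    have g2 := Real.geom_mean_le_arith_mean2_weighted (one_div_nonneg.2 hp0.le) hq0 ht0 hl0 hpq
    refine (add_le_add g1 g2).trans (le_of_eq ?_)
    linear_combination hpq
  have hsum : a * X + b * Y = S ^ (1/p) := by
    rw [ha, hb, hl1, hl, term_aux p _ X S hp ht1' hX hS, term_aux p _ Y S hp ht0 hY hS,
      ← add_div, ← hSdef, div_eq_iff (by positivity), ← Real.rpow_add hS, hpq, Real.rpow_one]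
  have main := core2 hn a b ha0 hb0 hab μ hg A B (lpComb p (1 - t) t A B) hA hB hAne hBne hAu hBu
    hAfin hBfin hABfin X Y hX hY hXA hYB (by
      rintro _ ⟨_, ⟨x, hx, rfl⟩, _, ⟨y, hy, rfl⟩, rfl⟩
      exact ⟨x, hx, y, hy, l, ⟨hl0, by linarith⟩, rfl⟩)
  rw [← hZC, hsum] at main
  have hle : S ^ (1/p) ≤ Z := le_of_pow_le_pow_left₀ hn hZ main
  calc S = (S ^ (1/p)) ^ p := by
        rw [← Real.rpow_mul hS0, one_div_mul_cancel hp0.ne', Real.rpow_one]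
    _ ≤ Z ^ p := Real.rpow_le_rpow (by positivity) hle hp0.le
end
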